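/- arXiv:2203.06645 — 2 statements merged into one kernel-verified Lean document; each statement's English description precedes it below -/
import Mathlib

section
/- A 2-dimensional subspace U ⊆ ⋀²W is totally isotropic for B if and only if there exist subspaces N ⊆ H ⊆ W with dim N = 1 and dim H = 3 such that U = span{v ∧ w : v ∈ N, w ∈ H}. -/
/-!
Contracting `x * x = 0` with a functional `f` gives `2 • ι v * x = 0`, where `ι v = f ⌋ x`. If
`v ≠ 0`, contracting `ι v * x = 0` with a functional equal to `1` at `v` exhibits `x` as a multiple
of `ι v`; so, in characteristic other than `2`, a bivector of square zero is decomposable.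

Let `U` be a plane of bivectors with pairwise zero products, spanned by `ι a * ι b` and `ι c * ι d`.
As `ι a * ι b * ι c * ι d = 0`, the planes `⟨a, b⟩` and `⟨c, d⟩` meet in a vector `v ≠ 0`, and `U`
lies in the range of `w ↦ v ∧ w`. The kernel of this map is the line `N` spanned by `v`, so the
preimage `H` of `U` is a three-dimensional space containing `N`, and `U = N ∧ H`.
When `dim W = 4`, the space `⋀⁴W` is a line, so `θ` does not affect isotropy.
-/

section DivisionRing

variable {K V W : Type*} [DivisionRing K] [AddCommGroup V] [Module K V]

lemma exists_eq_span_pair_of_finrank_eq_two {U : Submodule K V} (hU : Module.finrank K U = 2) :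
    ∃ u ≠ 0, ∃ u' ≠ 0, U = Submodule.span K {u, u'} := by
  have : FiniteDimensional K U := .of_finrank_eq_succ hU
  let e := Module.finBasisOfFinrankEq K U hU
  refine ⟨e 0, by simpa using e.ne_zero 0, e 1, by simpa using e.ne_zero 1, ?_⟩
  have hspan := congrArg (Submodule.map U.subtype) e.span_eq
  rw [Submodule.map_span, Submodule.map_subtype_top, ← Set.range_comp] at hspan
  rw [← Matrix.range_cons_cons_empty _ _ ![]]
  refine hspan.symm.trans ?_
  congr 2
  ext i
  fin_cases i <;> rfl

lemma injective_of_ne_zero_of_finrank_eq_one (hV : Module.finrank K V = 1) {f : V →ₗ[K] K}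
    (hf : f ≠ 0) : Function.Injective f := by
  have : FiniteDimensional K V := .of_finrank_eq_succ hV
  exact (LinearMap.injective_iff_surjective_of_finrank_eq_finrank (by simp [hV])).2
    (LinearMap.surjective hf)

variable [AddCommGroup W] [Module K W]

lemma finrank_comap_of_le_range (f : W →ₗ[K] V) [FiniteDimensional K f.ker]
    (U : Submodule K V) [FiniteDimensional K U] (hU : U ≤ f.range) :
    Module.finrank K (U.comap f) = Module.finrank K f.ker + Module.finrank K U := by
  have h := (f.domRestrict (U.comap f)).finrank_range_add_finrank_ker
  have hker : Module.finrank K (f.domRestrict (U.comap f)).ker = Module.finrank K f.ker := by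
    rw [LinearMap.ker_domRestrict]
    exact (Submodule.comapSubtypeEquivOfLe (LinearMap.ker_le_comap f)).finrank_eq
  rw [LinearMap.range_domRestrict, Submodule.map_comap_eq_of_le hU, hker] at h
  omega

end DivisionRing

section CommRing

open CliffordAlgebra (contractLeft contractLeft_ι_mul contractLeft_ι)
open ExteriorAlgebra (ι ι_sq_zero ι_add_mul_swap)

variable {R M : Type*} [CommRing R] [AddCommGroup M] [Module R M] {x : ExteriorAlgebra R M}

lemma ι_mul_ι_swap (v w : M) : ι R v * ι R w = -(ι R w * ι R v) :=
  eq_neg_of_add_eq_zero_left (ι_add_mul_swap v w)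

lemma ι_mul_ι_mem_exteriorPower_two (v w : M) : ι R v * ι R w ∈ ⋀[R]^2 M := by
  rw [ExteriorAlgebra.exteriorPower, pow_two]
  exact Submodule.mul_mem_mul (LinearMap.mem_range_self _ v) (LinearMap.mem_range_self _ w)

lemma ι_mul_ι_mul_ι_mul_ι_eq_zero (v a b : M) : ι R v * ι R a * (ι R v * ι R b) = 0 := by
  rw [ι_mul_ι_swap v a, neg_mul, mul_assoc, ← mul_assoc (ι R v), ι_sq_zero, zero_mul, mul_zero,
    neg_zero]

lemma ι_mul_ι_mul_ι_eq_zero_of_mem_span_pair {a b v : M} (hv : v ∈ Submodule.span R {a, b}) :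
    ι R v * (ι R a * ι R b) = 0 := by
  obtain ⟨r, s, rfl⟩ := Submodule.mem_span_pair.1 hv
  have hb : ι R b * (ι R a * ι R b) = 0 := by
    rw [ι_mul_ι_swap a b, mul_neg, ← mul_assoc, ι_sq_zero, zero_mul, neg_zero]
  rw [map_add, map_smul, map_smul, add_mul, smul_mul_assoc, smul_mul_assoc, hb, ← mul_assoc,
    ι_sq_zero, zero_mul, smul_zero, smul_zero, add_zero]

lemma eq_ι_mul_contractLeft_of_ι_mul_eq_zero {f : Module.Dual R M} {v : M} (hf : f v = 1)
    (hx : ι R v * x = 0) : x = ι R v * contractLeft f x := by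
  have h : f v • x - ι R v * contractLeft f x = 0 := by
    rw [← contractLeft_ι_mul, hx, map_zero]
  rwa [hf, one_smul, sub_eq_zero] at h

@[elab_as_elim]
lemma exteriorPower_two_induction {P : (x : ExteriorAlgebra R M) → x ∈ ⋀[R]^2 M → Prop}
    (ι_mul_ι : ∀ a b, P (ι R a * ι R b) (ι_mul_ι_mem_exteriorPower_two a b))
    (add : ∀ x y hx hy, P x hx → P y hy → P (x + y) (add_mem hx hy))
    (hx : x ∈ ⋀[R]^2 M) : P x hx := by
  have hx' : x ∈ (ι R : M →ₗ[R] ExteriorAlgebra R M).range * (ι R).range := by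
    rwa [← pow_two]
  induction hx' using Submodule.mul_induction_on' with
  | mem_mul_mem _ ha _ hb =>
    obtain ⟨a, rfl⟩ := ha
    obtain ⟨b, rfl⟩ := hb
    exact ι_mul_ι a b
  | add x hx' y hy' Px Py =>
    rw [← pow_two] at hx' hy'
    exact add x y hx' hy' (Px hx') (Py hy')

lemma contractLeft_ι_mul_ι (f : Module.Dual R M) (a b : M) :
    contractLeft f (ι R a * ι R b) = ι R (f a • b - f b • a) := by
  rw [contractLeft_ι_mul, contractLeft_ι, ← Algebra.commutes, ← Algebra.smul_def, map_sub,
    map_smul, map_smul]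

lemma exists_contractLeft_eq_ι (f : Module.Dual R M) (hx : x ∈ ⋀[R]^2 M) :
    ∃ v, contractLeft f x = ι R v := by
  induction hx using exteriorPower_two_induction with
  | ι_mul_ι a b => exact ⟨_, contractLeft_ι_mul_ι f a b⟩
  | add x y _ _ hx hy =>
    obtain ⟨v, hv⟩ := hx
    obtain ⟨w, hw⟩ := hy
    exact ⟨v + w, by rw [map_add, map_add, hv, hw]⟩

lemma commute_ι_of_mem_exteriorPower_two (v : M) (hx : x ∈ ⋀[R]^2 M) : Commute (ι R v) x := by
  induction hx using exteriorPower_two_induction with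
  | ι_mul_ι a b =>
    rw [commute_iff_eq, ← mul_assoc, ι_mul_ι_swap v a, neg_mul, mul_assoc, ι_mul_ι_swap v b,
      mul_neg, neg_neg, mul_assoc]
  | add x y _ _ hx hy => exact hx.add_right hy

lemma contractLeft_mul_of_mem_exteriorPower_two (f : Module.Dual R M) (hx : x ∈ ⋀[R]^2 M)
    (y : ExteriorAlgebra R M) :
    contractLeft f (x * y) = contractLeft f x * y + x * contractLeft f y := by
  induction hx using exteriorPower_two_induction with
  | ι_mul_ι a b =>
    rw [mul_assoc, contractLeft_ι_mul, contractLeft_ι_mul, contractLeft_ι_mul_ι]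
    simp only [map_sub, map_smul, sub_mul, mul_sub, smul_mul_assoc, mul_smul_comm, mul_assoc]
    abel
  | add x z _ _ hx hz =>
    rw [add_mul, map_add, map_add, hx, hz]
    noncomm_ring

-- Euler's identity `∑ eᵢ ∧ (eᵢ* ⌋ x) = 2 • x` for bivectors. Each `x` involves only finitely many
-- basis vectors, so all sufficiently large partial sums agree even when the basis is infinite.
lemma eventually_sum_ι_mul_contractLeft_eq_two_smul {I : Type*} (b : Module.Basis I R M)
    (hx : x ∈ ⋀[R]^2 M) :
    ∀ᶠ s : Finset I in Filter.atTop,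
      ∑ i ∈ s, ι R (b i) * contractLeft (b.coord i) x = (2 : R) • x := by
  induction hx using exteriorPower_two_induction with
  | ι_mul_ι v w =>
    have expansion (u : M) : ∀ᶠ s : Finset I in Filter.atTop, ∑ i ∈ s, b.coord i u • b i = u := by
      filter_upwards [Filter.eventually_ge_atTop (b.repr u).support] with s hs
      calc ∑ i ∈ s, b.coord i u • b i
          = Finsupp.linearCombination R b (b.repr u) :=
            (Finsupp.sum_of_support_subset _ hs (fun i r => r • b i) fun i _ => zero_smul R _).symm
        _ = u := b.linearCombination_repr u
    filter_upwards [expansion v, expansion w] with s hv hw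
    calc ∑ i ∈ s, ι R (b i) * contractLeft (b.coord i) (ι R v * ι R w)
        = ι R (∑ i ∈ s, b.coord i v • b i) * ι R w - ι R (∑ i ∈ s, b.coord i w • b i) * ι R v := by
          simp only [contractLeft_ι_mul_ι, map_sub, map_smul, map_sum, mul_sub, mul_smul_comm,
            Finset.sum_sub_distrib, Finset.sum_mul, smul_mul_assoc]
      _ = (2 : R) • (ι R v * ι R w) := by
          rw [hv, hw, ι_mul_ι_swap w v, sub_neg_eq_add, two_smul]
  | add x y _ _ hx hy =>
    filter_upwards [hx, hy] with s hxs hys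
    simp only [map_add, mul_add, Finset.sum_add_distrib, hxs, hys, smul_add]

variable (R M) in
/-- The exterior product of two vectors, as a bilinear map to `⋀²M`. -/
noncomputable def vectorWedge : M →ₗ[R] M →ₗ[R] ⋀[R]^2 M :=
  LinearMap.mk₂ R
    (fun v w => ⟨ι R v * ι R w, ι_mul_ι_mem_exteriorPower_two v w⟩)
    (fun v v' w => by ext; simp [add_mul])
    (fun r v w => by ext; simp)
    (fun v w w' => by ext; simp [mul_add])
    (fun r v w => by ext; simp)

@[simp]
lemma coe_vectorWedge (v w : M) :
    (vectorWedge R M v w : ExteriorAlgebra R M) = ι R v * ι R w :=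
  rfl

lemma span_ι_mul_ι_eq_map₂_vectorWedge (N H : Submodule R M) :
    Submodule.span R {x : ⋀[R]^2 M | ∃ v ∈ N, ∃ w ∈ H,
      (x : ExteriorAlgebra R M) = ι R v * ι R w} = Submodule.map₂ (vectorWedge R M) N H := by
  rw [Submodule.map₂_eq_span_image2]
  congr 1
  ext x
  simp only [Set.mem_ofPred_eq, Set.mem_image2, SetLike.mem_coe, Subtype.ext_iff, coe_vectorWedge,
    eq_comm]

end CommRing

section Field

open CliffordAlgebra (contractLeft contractLeft_ι)
open ExteriorAlgebra (ι ι_sq_zero ι_inj ιMulti)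

variable {K W : Type*} [Field K] [AddCommGroup W] [Module K W]

lemma ιMulti_ne_zero_of_linearIndependent {n : ℕ} {v : Fin n → W} (hv : LinearIndependent K v) :
    ιMulti K n v ≠ 0 := by
  have h := (exteriorPower.ιMulti_family_linearIndependent_field n hv).ne_zero
    (Set.powersetCard.ofFinEmbEquiv (RelEmbedding.refl (· ≤ ·)))
  rw [exteriorPower.ιMulti_family, Equiv.symm_apply_apply] at h
  simpa [Subtype.ext_iff] using h

lemma not_disjoint_span_of_ιMulti_mul_ιMulti_eq_zero {m n : ℕ} {a : Fin m → W} {b : Fin n → W}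
    (ha : LinearIndependent K a) (hb : LinearIndependent K b)
    (h : ιMulti K m a * ιMulti K n b = 0) :
    ¬Disjoint (Submodule.span K (Set.range a)) (Submodule.span K (Set.range b)) := by
  intro hab
  rw [ExteriorAlgebra.ιMulti_mul_ιMulti] at h
  refine ιMulti_ne_zero_of_linearIndependent ?_ h
  rw [← linearIndependent_equiv finSumFinEquiv]
  have happend : Fin.append a b ∘ finSumFinEquiv = Sum.elim a b := Fin.append_comp_sumElim
  rw [happend]
  exact ha.sum_type hb hab

lemma exists_contractLeft_ne_zero (h2 : (2 : K) ≠ 0) {x : ExteriorAlgebra K W}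
    (hx : x ∈ ⋀[K]^2 W) (hx0 : x ≠ 0) : ∃ f : Module.Dual K W, contractLeft f x ≠ 0 := by
  by_contra! h
  obtain ⟨s, hs⟩ :=
    (eventually_sum_ι_mul_contractLeft_eq_two_smul (Module.Basis.ofVectorSpace K W) hx).exists
  simp only [h, mul_zero, Finset.sum_const_zero] at hs
  exact smul_ne_zero h2 hx0 hs.symm

lemma mem_range_vectorWedge_iff {v : W} (hv : v ≠ 0) (x : ⋀[K]^2 W) :
    x ∈ (vectorWedge K W v).range ↔ ι K v * (x : ExteriorAlgebra K W) = 0 := by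
  constructor
  · rintro ⟨w, rfl⟩
    rw [coe_vectorWedge, ← mul_assoc, ι_sq_zero, zero_mul]
  · intro h
    obtain ⟨f, hf⟩ := Module.Projective.exists_dual_eq_one K hv
    obtain ⟨w, hw⟩ := exists_contractLeft_eq_ι f x.2
    refine ⟨w, Subtype.ext ?_⟩
    rw [coe_vectorWedge, ← hw, ← eq_ι_mul_contractLeft_of_ι_mul_eq_zero hf h]

lemma ker_vectorWedge {v : W} (hv : v ≠ 0) : (vectorWedge K W v).ker = K ∙ v := by
  ext w
  rw [LinearMap.mem_ker, Submodule.mem_span_singleton, Subtype.ext_iff, coe_vectorWedge]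
  constructor
  · intro h
    obtain ⟨f, hf⟩ := Module.Projective.exists_dual_eq_one K hv
    refine ⟨f w, (ι_inj K _ _).1 ?_⟩
    rw [eq_ι_mul_contractLeft_of_ι_mul_eq_zero hf h, contractLeft_ι, ← Algebra.commutes,
      ← Algebra.smul_def, map_smul]
  · rintro ⟨r, rfl⟩
    simp

lemma exists_eq_vectorWedge_of_mul_self_eq_zero (h2 : (2 : K) ≠ 0) {x : ⋀[K]^2 W}
    (hx : (x : ExteriorAlgebra K W) * x = 0) : ∃ v w, x = vectorWedge K W v w := by
  rcases eq_or_ne x 0 with rfl | hx0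
  · exact ⟨0, 0, by simp⟩
  obtain ⟨f, hf⟩ := exists_contractLeft_ne_zero h2 x.2 (by simpa using hx0)
  obtain ⟨v, hv⟩ := exists_contractLeft_eq_ι f x.2
  have hv0 : v ≠ 0 := by
    rintro rfl
    exact hf (by rw [hv, map_zero])
  have h2vx : (2 : K) • (ι K v * (x : ExteriorAlgebra K W)) = 0 := by
    rw [two_smul]
    nth_rw 2 [(commute_ι_of_mem_exteriorPower_two v x.2).eq]
    rw [← hv, ← contractLeft_mul_of_mem_exteriorPower_two f x.2, hx, map_zero]
  obtain ⟨w, rfl⟩ := (mem_range_vectorWedge_iff hv0 x).2 ((smul_eq_zero_iff_right h2).1 h2vx)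
  exact ⟨v, w, rfl⟩

lemma linearIndependent_pair_of_vectorWedge_ne_zero {a b : W} (h : vectorWedge K W a b ≠ 0) :
    LinearIndependent K ![a, b] := by
  have ha : a ≠ 0 := by
    rintro rfl
    simp at h
  rw [LinearIndependent.pair_iff' ha]
  rintro r rfl
  apply h
  rw [← LinearMap.mem_ker, ker_vectorWedge ha]
  exact Submodule.smul_mem _ r (Submodule.mem_span_singleton_self a)

lemma exists_mem_range_vectorWedge_of_mul_eq_zero {a b c d : W}
    (hab : vectorWedge K W a b ≠ 0) (hcd : vectorWedge K W c d ≠ 0)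
    (h : (vectorWedge K W a b : ExteriorAlgebra K W) * vectorWedge K W c d = 0) :
    ∃ v ≠ 0, vectorWedge K W a b ∈ (vectorWedge K W v).range ∧
      vectorWedge K W c d ∈ (vectorWedge K W v).range := by
  have hmeet := not_disjoint_span_of_ιMulti_mul_ιMulti_eq_zero
    (linearIndependent_pair_of_vectorWedge_ne_zero hab)
    (linearIndependent_pair_of_vectorWedge_ne_zero hcd)
    (by simpa [ExteriorAlgebra.ιMulti_apply] using h)
  simp only [Submodule.disjoint_def, Matrix.range_cons_cons_empty, not_forall] at hmeet
  obtain ⟨v, hvab, hvcd, hv⟩ := hmeet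
  exact ⟨v, hv, (mem_range_vectorWedge_iff hv _).2 (ι_mul_ι_mul_ι_eq_zero_of_mem_span_pair hvab),
    (mem_range_vectorWedge_iff hv _).2 (ι_mul_ι_mul_ι_eq_zero_of_mem_span_pair hvcd)⟩

lemma exists_le_range_vectorWedge (h2 : (2 : K) ≠ 0) {U : Submodule K (⋀[K]^2 W)}
    (hU : Module.finrank K U = 2)
    (hiso : ∀ u ∈ U, ∀ u' ∈ U, (u : ExteriorAlgebra K W) * u' = 0) :
    ∃ v ≠ 0, U ≤ (vectorWedge K W v).range := by
  obtain ⟨x, hx, y, hy, rfl⟩ := exists_eq_span_pair_of_finrank_eq_two hU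
  have hxU : x ∈ Submodule.span K {x, y} := Submodule.subset_span (by simp)
  have hyU : y ∈ Submodule.span K {x, y} := Submodule.subset_span (by simp)
  obtain ⟨a, b, rfl⟩ := exists_eq_vectorWedge_of_mul_self_eq_zero h2 (hiso x hxU x hxU)
  obtain ⟨c, d, rfl⟩ := exists_eq_vectorWedge_of_mul_self_eq_zero h2 (hiso y hyU y hyU)
  obtain ⟨v, hv, hab, hcd⟩ :=
    exists_mem_range_vectorWedge_of_mul_eq_zero hx hy (hiso _ hxU _ hyU)
  exact ⟨v, hv, Submodule.span_le.2 (Set.pair_subset hab hcd)⟩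

lemma mul_eq_zero_of_mem_range_vectorWedge {v : W} {x y : ⋀[K]^2 W}
    (hx : x ∈ (vectorWedge K W v).range) (hy : y ∈ (vectorWedge K W v).range) :
    (x : ExteriorAlgebra K W) * y = 0 := by
  obtain ⟨a, rfl⟩ := hx
  obtain ⟨b, rfl⟩ := hy
  exact ι_mul_ι_mul_ι_mul_ι_eq_zero v a b

lemma exists_le_range_vectorWedge_iff_exists_flag (U : Submodule K (⋀[K]^2 W))
    [FiniteDimensional K U] :
    (∃ v ≠ 0, U ≤ (vectorWedge K W v).range) ↔
      ∃ N H : Submodule K W, N ≤ H ∧ Module.finrank K N = 1 ∧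
        Module.finrank K H = Module.finrank K U + 1 ∧ U = Submodule.map₂ (vectorWedge K W) N H := by
  constructor
  · rintro ⟨v, hv, hU⟩
    have : FiniteDimensional K (vectorWedge K W v).ker := by
      rw [ker_vectorWedge hv]
      infer_instance
    refine ⟨K ∙ v, U.comap (vectorWedge K W v), ?_, finrank_span_singleton hv, ?_, ?_⟩
    · rw [← ker_vectorWedge hv]
      exact LinearMap.ker_le_comap _
    · rw [finrank_comap_of_le_range _ U hU, ker_vectorWedge hv, finrank_span_singleton hv, add_comm]
    · rw [Submodule.map₂_span_singleton_eq_map, Submodule.map_comap_eq_of_le hU]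
  · rintro ⟨N, H, -, hN, -, hU⟩
    obtain ⟨v, hvN, hv⟩ := N.exists_mem_ne_zero_of_ne_bot (by rintro rfl; simp at hN)
    rw [eq_span_singleton_of_mem_of_finrank_eq_one hN hvN hv,
      Submodule.map₂_span_singleton_eq_map] at hU
    exact ⟨v, hv, hU ▸ LinearMap.map_le_range⟩

theorem stmt_12_general (h2 : (2 : K) ≠ 0) (U : Submodule K (⋀[K]^2 W))
    (hU : Module.finrank K U = 2) :
    (∀ u ∈ U, ∀ u' ∈ U, (u : ExteriorAlgebra K W) * u' = 0) ↔
      ∃ (N H : Submodule K W), N ≤ H ∧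
        Module.finrank K N = 1 ∧ Module.finrank K H = 3 ∧
        U = Submodule.span K {x : ⋀[K]^2 W | ∃ v ∈ N, ∃ w ∈ H,
          (x : ExteriorAlgebra K W) = ExteriorAlgebra.ι K v * ExteriorAlgebra.ι K w} := by
  have : FiniteDimensional K U := .of_finrank_eq_succ hU
  have hflag := exists_le_range_vectorWedge_iff_exists_flag U
  simp only [hU] at hflag
  simp only [span_ι_mul_ι_eq_map₂_vectorWedge, ← hflag]
  constructor
  · exact exists_le_range_vectorWedge h2 hU
  · rintro ⟨v, -, hUv⟩ u hu u' hu'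
    exact mul_eq_zero_of_mem_range_vectorWedge (hUv hu) (hUv hu')

end Field

/-- A 2-dimensional subspace `U ⊆ ⋀²W` is totally isotropic for `B` iff there is a flag
`N ⊆ H ⊆ W` with `dim N = 1`, `dim H = 3` such that `U = span{v ∧ w : v ∈ N, w ∈ H}`. -/
theorem stmt_12 (K : Type*) [Field K] (hK2 : (2 : K) ≠ 0)
    (W : Type*) [AddCommGroup W] [Module K W] [FiniteDimensional K W]
    (hW : Module.finrank K W = 4)
    (wedge : ⋀[K]^2 W →ₗ[K] ⋀[K]^2 W →ₗ[K] ⋀[K]^4 W)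
    (hwedge : ∀ x y : ⋀[K]^2 W,
      (wedge x y : ExteriorAlgebra K W) = (x : ExteriorAlgebra K W) * (y : ExteriorAlgebra K W))
    (θ : ⋀[K]^4 W →ₗ[K] K) (hθ : θ ≠ 0)
    (B : ⋀[K]^2 W →ₗ[K] ⋀[K]^2 W →ₗ[K] K)
    (hB : ∀ x y : ⋀[K]^2 W, B x y = θ (wedge x y))
    (U : Submodule K (⋀[K]^2 W)) (hU : Module.finrank K U = 2) :
    (∀ u ∈ U, ∀ u' ∈ U, B u u' = 0) ↔
      ∃ (N H : Submodule K W), N ≤ H ∧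
        Module.finrank K N = 1 ∧ Module.finrank K H = 3 ∧
        U = Submodule.span K {x : ⋀[K]^2 W | ∃ v ∈ N, ∃ w ∈ H,
          (x : ExteriorAlgebra K W) = ExteriorAlgebra.ι K v * ExteriorAlgebra.ι K w} := by
  have hθ_inj : Function.Injective θ :=
    injective_of_ne_zero_of_finrank_eq_one (by rw [exteriorPower.finrank_eq, hW]; rfl) hθ
  have hB_iff (x y : ⋀[K]^2 W) : B x y = 0 ↔ (x : ExteriorAlgebra K W) * y = 0 := by
    rw [hB, map_eq_zero_iff θ hθ_inj, ← hwedge, ZeroMemClass.coe_eq_zero]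
  simpa only [hB_iff] using stmt_12_general hK2 U hU
end

section
/- A 2-dimensional subspace U ⊆ S is totally isotropic for B if and only if there exists a 1-dimensional subspace N ⊆ W such that U = span{v ∧ w : v ∈ N, w ∈ N^⊥}, where N^⊥ = {w ∈ W : α(v, w) = 0 for all v ∈ N} (a 3-dimensional subspace containing N). -/
/-!
Since `θ` is injective on the line `⋀⁴W`, a subspace `U` is isotropic exactly when `x ∧ y = 0` for
all `x, y ∈ U`. Contracting `x ∧ x = 0` with a functional `d` gives `2 (d ⌋ x) ∧ x = 0`, so a
bivector of square zero is divisible by a vector, i.e. it is of the form `a ∧ b`. If moreover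
`(a ∧ b) ∧ (a₁ ∧ b₁) = 0`, the planes spanned by `a, b` and by `a₁, b₁` meet in a nonzero `v`,
which then divides every element of the two-dimensional `U`. The condition `U ⊆ ker α̃` puts the
other factor in `v^⊥`, so `U ⊆ v ∧ v^⊥`, and both sides have dimension two.
-/

open Module ExteriorAlgebra
open CliffordAlgebra (contractLeft involute)

section Contraction

variable {R M : Type*} [CommRing R] [AddCommGroup M] [Module R M]

theorem contractLeft_mul {Q : QuadraticForm R M} (d : Dual R M) (x y : CliffordAlgebra Q) :
    contractLeft d (x * y) = contractLeft d x * y + involute x * contractLeft d y := by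
  induction x using CliffordAlgebra.left_induction with
  | algebraMap r =>
    rw [CliffordAlgebra.contractLeft_algebraMap_mul, CliffordAlgebra.contractLeft_algebraMap,
      AlgHom.commutes, zero_mul, zero_add]
  | add x x' hx hx' =>
    simp only [add_mul, map_add, hx, hx']
    abel
  | ι_mul x m hx =>
    simp only [mul_assoc, CliffordAlgebra.contractLeft_ι_mul, hx, map_mul,
      CliffordAlgebra.involute_ι, sub_mul, mul_add, smul_mul_assoc, neg_mul]
    abel

theorem ι_mul_ι_eq_ιMulti (a b : M) : ι R a * ι R b = ιMulti R 2 ![a, b] := by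
  simp [ιMulti_apply]

theorem ι_mul_eq_involute_mul_ι (v : M) (x : ExteriorAlgebra R M) :
    ι R v * x = involute x * ι R v := by
  induction x using CliffordAlgebra.left_induction with
  | algebraMap r => rw [AlgHom.commutes, Algebra.commutes]
  | add x y hx hy => rw [mul_add, map_add, add_mul, hx, hy]
  | ι_mul x m hx =>
    rw [map_mul, CliffordAlgebra.involute_ι, mul_assoc, ← hx, ← mul_assoc, ← mul_assoc, neg_mul,
      ← eq_neg_of_add_eq_zero_left (ι_add_mul_swap v m)]

theorem involute_eq_of_mem_exteriorPower {n : ℕ} (hn : Even n) {x : ExteriorAlgebra R M}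
    (hx : x ∈ ⋀[R]^n M) : involute x = x :=
  CliffordAlgebra.involute_eq_of_mem_even <|
    Submodule.mem_iSup_of_mem (p := fun j : {k : ℕ // (k : ZMod 2) = 0} ↦ ⋀[R]^(j : ℕ) M)
      ⟨n, ZMod.natCast_eq_zero_iff_even.2 hn⟩ hx

theorem mem_exteriorPower_one {x : ExteriorAlgebra R M} : x ∈ ⋀[R]^1 M ↔ ∃ w, ι R w = x := by
  rw [exteriorPower, pow_one, LinearMap.mem_range]

theorem contractLeft_mem_exteriorPower (d : Dual R M) {n : ℕ} {x : ExteriorAlgebra R M}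
    (hx : x ∈ ⋀[R]^(n + 1) M) : contractLeft d x ∈ ⋀[R]^n M := by
  induction n generalizing x with
  | zero =>
    obtain ⟨a, rfl⟩ := mem_exteriorPower_one.1 hx
    rw [CliffordAlgebra.contractLeft_ι]
    exact SetLike.algebraMap_mem_graded (fun i : ℕ ↦ ⋀[R]^i M) _
  | succ n ih =>
    rw [exteriorPower, pow_succ'] at hx
    induction hx using Submodule.mul_induction_on' with
    | add x _ y _ hx hy =>
      rw [map_add]
      exact add_mem hx hy
    | mem_mul_mem m hm x hx =>
      obtain ⟨a, rfl⟩ := hm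
      rw [CliffordAlgebra.contractLeft_ι_mul]
      refine sub_mem (Submodule.smul_mem _ _ hx) ?_
      rw [exteriorPower, pow_succ']
      exact Submodule.mul_mem_mul (LinearMap.mem_range_self _ a) (ih hx)

theorem sum_ι_mul_contractLeft_coord {I : Type*} [Fintype I] (e : Basis I R M) {n : ℕ}
    {x : ExteriorAlgebra R M} (hx : x ∈ ⋀[R]^n M) :
    ∑ i, ι R (e i) * contractLeft (e.coord i) x = n • x := by
  induction hx using Submodule.pow_induction_on_left' with
  | algebraMap r =>
    simp only [CliffordAlgebra.contractLeft_algebraMap, mul_zero, Finset.sum_const_zero, zero_smul]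
  | add x y n _ _ hx hy => simp only [map_add, mul_add, Finset.sum_add_distrib, hx, hy, smul_add]
  | mem_mul m hm n x _ hx =>
    obtain ⟨a, rfl⟩ := hm
    have sum_coord : ∑ i, e.coord i a • ι R (e i) = ι R a := by
      simp only [Basis.coord_apply, ← map_smul, ← map_sum, e.sum_repr]
    have swap (i : I) (y : ExteriorAlgebra R M) :
        ι R (e i) * (ι R a * y) = -(ι R a * (ι R (e i) * y)) := by
      rw [← mul_assoc, eq_neg_of_add_eq_zero_left (ι_add_mul_swap (e i) a), neg_mul, mul_assoc]
    simp only [CliffordAlgebra.contractLeft_ι_mul, mul_sub, mul_smul_comm, swap, sub_neg_eq_add,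
      Finset.sum_add_distrib, ← Finset.mul_sum, hx, ← smul_mul_assoc, ← Finset.sum_mul, sum_coord]
    rw [Nat.succ_eq_add_one, succ_nsmul', add_mul, smul_mul_assoc]

end Contraction

section Decomposable

variable {K V : Type*} [Field K] [AddCommGroup V] [Module K V]

theorem exists_contractLeft_ne_zero_s13 [FiniteDimensional K V] {n : ℕ} (hn : (n : K) ≠ 0)
    {x : ExteriorAlgebra K V} (hx : x ∈ ⋀[K]^n V) (hx0 : x ≠ 0) :
    ∃ d : Dual K V, contractLeft d x ≠ 0 := by
  by_contra! h
  have euler := sum_ι_mul_contractLeft_coord (finBasis K V) hx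
  simp only [h, mul_zero, Finset.sum_const_zero, ← Nat.cast_smul_eq_nsmul K] at euler
  exact smul_ne_zero hn hx0 euler.symm

theorem exists_eq_ι_mul_of_ι_mul_eq_zero {v : V} (hv : v ≠ 0) {n : ℕ} {x : ExteriorAlgebra K V}
    (hx : x ∈ ⋀[K]^(n + 1) V) (hvx : ι K v * x = 0) : ∃ y ∈ ⋀[K]^n V, x = ι K v * y := by
  obtain ⟨d, hd⟩ := Projective.exists_dual_eq_one K hv
  refine ⟨contractLeft d x, contractLeft_mem_exteriorPower d hx, ?_⟩
  have h := CliffordAlgebra.contractLeft_ι_mul (Q := 0) d v x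
  rwa [hvx, map_zero, hd, one_smul, eq_comm, sub_eq_zero] at h

theorem exists_eq_ι_mul_ι_of_ι_mul_eq_zero {v : V} (hv : v ≠ 0) {x : ExteriorAlgebra K V}
    (hx : x ∈ ⋀[K]^2 V) (hvx : ι K v * x = 0) : ∃ w, x = ι K v * ι K w := by
  obtain ⟨y, hy, rfl⟩ := exists_eq_ι_mul_of_ι_mul_eq_zero hv hx hvx
  obtain ⟨w, rfl⟩ := mem_exteriorPower_one.1 hy
  exact ⟨w, rfl⟩

theorem exists_eq_ι_mul_ι_of_mul_self_eq_zero [FiniteDimensional K V] (h2 : (2 : K) ≠ 0)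
    {x : ExteriorAlgebra K V} (hx : x ∈ ⋀[K]^2 V) (hxx : x * x = 0) :
    ∃ a b, x = ι K a * ι K b := by
  obtain rfl | hx0 := eq_or_ne x 0
  · exact ⟨0, 0, by rw [map_zero, zero_mul]⟩
  obtain ⟨d, hd⟩ := exists_contractLeft_ne_zero_s13 (n := 2) (mod_cast h2) hx hx0
  obtain ⟨v, hv⟩ : ∃ v, ι K v = contractLeft d x :=
    mem_exteriorPower_one.1 (contractLeft_mem_exteriorPower d hx)
  have hv0 : v ≠ 0 := by
    rintro rfl
    exact hd (by rw [← hv, map_zero])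
  have hvx : (2 : K) • (ι K v * x) = 0 := by
    have involute_x := involute_eq_of_mem_exteriorPower even_two hx
    calc (2 : K) • (ι K v * x) = ι K v * x + x * ι K v := by
          rw [two_smul, ι_mul_eq_involute_mul_ι, involute_x]
      _ = contractLeft d (x * x) := by rw [contractLeft_mul, involute_x, hv]
      _ = 0 := by rw [hxx, map_zero]
  obtain ⟨w, hw⟩ := exists_eq_ι_mul_ι_of_ι_mul_eq_zero hv0 hx ((smul_eq_zero.1 hvx).resolve_left h2)
  exact ⟨v, w, hw⟩

theorem ιMulti_ne_zero_iff_linearIndependent {n : ℕ} {f : Fin n → V} :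
    ιMulti K n f ≠ 0 ↔ LinearIndependent K f := by
  refine ⟨fun hf ↦ ?_, fun hf ↦ ?_⟩
  · contrapose! hf
    exact AlternatingMap.map_linearDependent _ f hf
  · have family_ne_zero := (exteriorPower.ιMulti_family_linearIndependent_field n hf).ne_zero
      (Set.powersetCard.ofFinEmbEquiv (RelEmbedding.refl _))
    rw [exteriorPower.ιMulti_family, Equiv.symm_apply_apply] at family_ne_zero
    exact fun h ↦ family_ne_zero (Subtype.ext h)

theorem ι_mul_ιMulti_eq_zero {n : ℕ} {f : Fin n → V} {v : V}
    (hv : v ∈ Submodule.span K (Set.range f)) : ι K v * ιMulti K n f = 0 := by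
  have dependent : ¬ LinearIndependent K (Fin.cons v f : Fin (n + 1) → V) := fun h ↦
    (linearIndependent_finCons.1 h).2 hv
  simpa only [ιMulti_succ_apply, Matrix.vecTail, Fin.cons_zero, Function.comp_def, Fin.cons_succ]
    using not_ne_iff.1 (mt ιMulti_ne_zero_iff_linearIndependent.1 dependent)

theorem not_disjoint_span_of_ιMulti_mul_ιMulti_eq_zero_s13 {m n : ℕ} {f : Fin m → V} {g : Fin n → V}
    (hf : ιMulti K m f ≠ 0) (hg : ιMulti K n g ≠ 0) (hfg : ιMulti K m f * ιMulti K n g = 0) :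
    ¬ Disjoint (Submodule.span K (Set.range f)) (Submodule.span K (Set.range g)) := by
  intro disjoint
  rw [ιMulti_ne_zero_iff_linearIndependent] at hf hg
  rw [ιMulti_mul_ιMulti] at hfg
  refine ιMulti_ne_zero_iff_linearIndependent.2 ?_ hfg
  have append_eq : Fin.append f g ∘ finSumFinEquiv = Sum.elim f g := Fin.append_comp_sumElim
  rw [← linearIndependent_equiv finSumFinEquiv, append_eq]
  exact hf.sum_type hg disjoint

theorem exists_ι_mul_eq_zero_of_mul_eq_zero [FiniteDimensional K V] (h2 : (2 : K) ≠ 0)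
    {x y : ExteriorAlgebra K V} (hx : x ∈ ⋀[K]^2 V) (hy : y ∈ ⋀[K]^2 V) (hx0 : x ≠ 0)
    (hy0 : y ≠ 0) (hxx : x * x = 0) (hyy : y * y = 0) (hxy : x * y = 0) :
    ∃ v ≠ 0, ι K v * x = 0 ∧ ι K v * y = 0 := by
  obtain ⟨a, b, rfl⟩ := exists_eq_ι_mul_ι_of_mul_self_eq_zero h2 hx hxx
  obtain ⟨c, d, rfl⟩ := exists_eq_ι_mul_ι_of_mul_self_eq_zero h2 hy hyy
  simp only [ι_mul_ι_eq_ιMulti] at hx0 hy0 hxy ⊢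
  have meet := not_disjoint_span_of_ιMulti_mul_ιMulti_eq_zero_s13 hx0 hy0 hxy
  obtain ⟨v, hv, hv0⟩ := Submodule.exists_mem_ne_zero_of_ne_bot (mt disjoint_iff.2 meet)
  exact ⟨v, hv0, ι_mul_ιMulti_eq_zero hv.1, ι_mul_ιMulti_eq_zero hv.2⟩

theorem exists_ι_mul_eq_zero_of_finrank_eq_two [FiniteDimensional K V] (h2 : (2 : K) ≠ 0)
    {U : Submodule K (⋀[K]^2 V)} (hU : finrank K U = 2)
    (hmul : ∀ x ∈ U, ∀ y ∈ U, (x : ExteriorAlgebra K V) * y = 0) :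
    ∃ v ≠ 0, ∀ x ∈ U, ι K v * (x : ExteriorAlgebra K V) = 0 := by
  have : Free K U := Free.of_divisionRing K U
  let e := finBasisOfFinrankEq K U hU
  have he0 (i : Fin 2) : ((e i : ⋀[K]^2 V) : ExteriorAlgebra K V) ≠ 0 := by
    simpa only [ne_eq, ZeroMemClass.coe_eq_zero] using e.ne_zero i
  have he (i j : Fin 2) := hmul (e i) (e i).2 (e j) (e j).2
  obtain ⟨v, hv0, hv⟩ := exists_ι_mul_eq_zero_of_mul_eq_zero h2 (e 0).1.2 (e 1).1.2 (he0 0)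
    (he0 1) (he 0 0) (he 1 1) (he 0 1)
  have mulLeft_eq_zero :
      LinearMap.mulLeft K (ι K v) ∘ₗ (⋀[K]^2 V).subtype ∘ₗ U.subtype = 0 :=
    e.ext (Fin.forall_fin_two.2 hv)
  exact ⟨v, hv0, fun x hx ↦ LinearMap.congr_fun mulLeft_eq_zero ⟨x, hx⟩⟩

end Decomposable

section Pencil

variable {R M : Type*} [CommRing R] [AddCommGroup M] [Module R M]

variable (R) in
/-- Exterior multiplication `w ↦ v ∧ w` by a fixed vector `v`, with values in `⋀²M`. -/
noncomputable def wedgeLeft (v : M) : M →ₗ[R] ⋀[R]^2 M :=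
  (LinearMap.mulLeft R (ι R v) ∘ₗ ι R).codRestrict (⋀[R]^2 M) fun w ↦
    SetLike.mul_mem_graded (A := fun i : ℕ ↦ ⋀[R]^i M) (i := 1) (j := 1)
      (mem_exteriorPower_one.2 ⟨v, rfl⟩) (mem_exteriorPower_one.2 ⟨w, rfl⟩)

theorem coe_wedgeLeft (v w : M) : (wedgeLeft R v w : ExteriorAlgebra R M) = ι R v * ι R w :=
  rfl

/-- The span of the bivectors `v ∧ w` with `v ∈ N` and `w` in the `α`-orthogonal complement of `N`.
For a line `N` in a symplectic space of dimension four the nonzero ones among these bivectors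
represent the Lagrangian planes containing `N`. -/
def lagrangianPencil (α : M →ₗ[R] M →ₗ[R] R) (N : Submodule R M) : Submodule R (⋀[R]^2 M) :=
  Submodule.span R {x | ∃ v ∈ N, ∃ w : M, (∀ u ∈ N, α u w = 0) ∧
    (x : ExteriorAlgebra R M) = ι R v * ι R w}

theorem lagrangianPencil_span_singleton (α : M →ₗ[R] M →ₗ[R] R) (v : M) :
    lagrangianPencil α (R ∙ v) = (LinearMap.ker (α v)).map (wedgeLeft R v) := by
  refine le_antisymm (Submodule.span_le.2 ?_) ?_
  · rintro x ⟨v', hv', w, hw, hx⟩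
    obtain ⟨c, rfl⟩ := Submodule.mem_span_singleton.1 hv'
    have hvw : w ∈ LinearMap.ker (α v) := hw v (Submodule.mem_span_singleton_self v)
    refine ⟨c • w, Submodule.smul_mem _ c hvw, Subtype.ext ?_⟩
    rw [coe_wedgeLeft, hx, map_smul, map_smul, mul_smul_comm, smul_mul_assoc]
  · rintro _ ⟨w, hw, rfl⟩
    refine Submodule.subset_span ⟨v, Submodule.mem_span_singleton_self v, w, fun u hu ↦ ?_, rfl⟩
    obtain ⟨c, rfl⟩ := Submodule.mem_span_singleton.1 hu
    rw [map_smul, LinearMap.smul_apply, LinearMap.mem_ker.1 hw, smul_zero]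

theorem mul_eq_zero_of_mem_lagrangianPencil_span_singleton {α : M →ₗ[R] M →ₗ[R] R} {v : M}
    {x y : ⋀[R]^2 M}
    (hx : x ∈ lagrangianPencil α (R ∙ v)) (hy : y ∈ lagrangianPencil α (R ∙ v)) :
    (x : ExteriorAlgebra R M) * y = 0 := by
  rw [lagrangianPencil_span_singleton] at hx hy
  obtain ⟨w, -, rfl⟩ := hx
  obtain ⟨w', -, rfl⟩ := hy
  rw [coe_wedgeLeft, coe_wedgeLeft, ι_mul_eq_involute_mul_ι v (ι R w), mul_assoc,
    ← mul_assoc (ι R v), ι_sq_zero, zero_mul, mul_zero]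

variable {K V : Type*} [Field K] [AddCommGroup V] [Module K V]

theorem ker_wedgeLeft {v : V} (hv : v ≠ 0) : LinearMap.ker (wedgeLeft K v) = K ∙ v := by
  ext w
  rw [LinearMap.mem_ker, ← ZeroMemClass.coe_eq_zero, coe_wedgeLeft, ι_mul_ι_eq_ιMulti,
    ← not_iff_not, ← ne_eq, ιMulti_ne_zero_iff_linearIndependent, LinearIndependent.pair_iff' hv,
    Submodule.mem_span_singleton, not_exists]

theorem finrank_lagrangianPencil_span_singleton [FiniteDimensional K V] {α : V →ₗ[K] V →ₗ[K] K}
    {v : V} (hvv : α v v = 0) (hv : α v ≠ 0) :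
    finrank K (lagrangianPencil α (K ∙ v)) + 2 = finrank K V := by
  have hv0 : v ≠ 0 := fun h ↦ hv (by rw [h, map_zero])
  have hle : K ∙ v ≤ LinearMap.ker (α v) := (Submodule.span_singleton_le_iff_mem v _).2 hvv
  have ker_dim : finrank K (LinearMap.ker (α v)) + 1 = finrank K V :=
    Dual.finrank_ker_add_one_of_ne_zero hv
  have rank_nullity :=
    ((wedgeLeft K v).domRestrict (LinearMap.ker (α v))).finrank_range_add_finrank_ker
  rw [LinearMap.range_domRestrict, LinearMap.ker_domRestrict, ker_wedgeLeft hv0,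
    (Submodule.comapSubtypeEquivOfLe hle).finrank_eq, finrank_span_singleton hv0] at rank_nullity
  rw [lagrangianPencil_span_singleton]
  lia

end Pencil

/-- A 2-dimensional subspace `U ⊆ S = ker α̃` is totally isotropic for `B` iff there is a
1-dimensional `N ⊆ W` with `U = span{v ∧ w : v ∈ N, w ∈ N^⊥}`, where `N^⊥` is the
`α`-orthogonal complement of `N` in `W`. -/
theorem stmt_13 (K : Type*) [Field K] (hK2 : (2 : K) ≠ 0)
    (W : Type*) [AddCommGroup W] [Module K W] [FiniteDimensional K W]
    (hW : Module.finrank K W = 4)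
    (wedge : ⋀[K]^2 W →ₗ[K] ⋀[K]^2 W →ₗ[K] ⋀[K]^4 W)
    (hwedge : ∀ x y : ⋀[K]^2 W,
      (wedge x y : ExteriorAlgebra K W) = (x : ExteriorAlgebra K W) * (y : ExteriorAlgebra K W))
    (θ : ⋀[K]^4 W →ₗ[K] K) (hθ : θ ≠ 0)
    (B : ⋀[K]^2 W →ₗ[K] ⋀[K]^2 W →ₗ[K] K)
    (hB : ∀ x y : ⋀[K]^2 W, B x y = θ (wedge x y))
    (α : W →ₗ[K] W →ₗ[K] K)
    (hαalt : ∀ v, α v v = 0) (hαnd : ∀ v, (∀ w, α v w = 0) → v = 0)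
    (αt : ⋀[K]^2 W →ₗ[K] K)
    (hαt : ∀ (x : ⋀[K]^2 W) (v w : W),
      (x : ExteriorAlgebra K W) = ExteriorAlgebra.ι K v * ExteriorAlgebra.ι K w →
      αt x = α v w)
    (U : Submodule K (⋀[K]^2 W)) (hUS : U ≤ LinearMap.ker αt)
    (hU : Module.finrank K U = 2) :
    (∀ u ∈ U, ∀ u' ∈ U, B u u' = 0) ↔
      ∃ N : Submodule K W, Module.finrank K N = 1 ∧
        U = Submodule.span K {x : ⋀[K]^2 W | ∃ v ∈ N, ∃ w : W,
          (∀ u ∈ N, α u w = 0) ∧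
          (x : ExteriorAlgebra K W) = ExteriorAlgebra.ι K v * ExteriorAlgebra.ι K w} := by
  have θ_injective : Function.Injective θ := by
    have : finrank K (⋀[K]^4 W) = finrank K K := by
      rw [exteriorPower.finrank_eq, hW, Nat.choose_self, finrank_self]
    exact (LinearMap.injective_iff_surjective_of_finrank_eq_finrank this).2
      (LinearMap.surjective hθ)
  have isotropic_iff (x y : ⋀[K]^2 W) : B x y = 0 ↔ (x : ExteriorAlgebra K W) * y = 0 := by
    rw [hB, map_eq_zero_iff θ θ_injective, ← hwedge, ZeroMemClass.coe_eq_zero]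
  simp only [isotropic_iff]
  change _ ↔ ∃ N : Submodule K W, finrank K N = 1 ∧ U = lagrangianPencil α N
  constructor
  · intro hmul
    obtain ⟨v, hv0, hv⟩ := exists_ι_mul_eq_zero_of_finrank_eq_two hK2 hU hmul
    refine ⟨K ∙ v, finrank_span_singleton hv0, Submodule.eq_of_le_of_finrank_eq (fun u hu ↦ ?_) ?_⟩
    · obtain ⟨w, hw⟩ := exists_eq_ι_mul_ι_of_ι_mul_eq_zero hv0 u.2 (hv u hu)
      rw [lagrangianPencil_span_singleton]
      exact ⟨w, (hαt u v w hw).symm.trans (hUS hu), Subtype.ext hw.symm⟩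
    · have hαv : α v ≠ 0 := fun h ↦ hv0 (hαnd v (LinearMap.congr_fun h))
      have := finrank_lagrangianPencil_span_singleton (hαalt v) hαv
      lia
  · rintro ⟨N, hN, rfl⟩ x hx y hy
    obtain ⟨v, rfl⟩ := (Submodule.finrank_le_one_iff_isPrincipal N).1 hN.le
    exact mul_eq_zero_of_mem_lagrangianPencil_span_singleton hx hy
end
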